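/- arXiv:2411.09712 — 2 statements merged into one kernel-verified Lean document; each statement's English description precedes it below -/
import Mathlib

section
/- Let φ > 0 and H > 0 be real numbers and let q, q₀, p be points of the Euclidean plane ℝ². Then log₂(1 + φ/(H² + ‖q - p‖²)) ≥ log₂(1 + φ/(H² + ‖q₀ - p‖²)) - φ·(log₂ e)·(‖q - p‖² - ‖q₀ - p‖²)/((φ + H² + ‖q₀ - p‖²)·(H² + ‖q₀ - p‖²)). -/
/-!
As a function of the squared distance `x = H² + ‖q - p‖²`, the rate `log_b (1 + φ / x)` is convex on
`(0, ∞)`: its derivative `-φ log_b e / ((φ + x) x)` increases. The bound says that its graph lies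
above the tangent line at `x₀ = H² + ‖q₀ - p‖²`; the altitude cancels in `x - x₀`.
-/

open Real Set

theorem tangent_line_le_of_convexOn {S : Set ℝ} {f : ℝ → ℝ} {f' a x : ℝ} (hf : ConvexOn ℝ S f)
    (ha : a ∈ S) (hx : x ∈ S) (hf' : HasDerivAt f f' a) : f a + f' * (x - a) ≤ f x := by
  rcases lt_trichotomy a x with hax | rfl | hxa
  · have hslope : f' ≤ slope f a x := hf.le_slope_of_hasDerivAt ha hx hax hf'
    rw [slope_def_field, le_div_iff₀ (sub_pos.2 hax)] at hslope
    linarith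
  · simp
  · have hslope : slope f x a ≤ f' := hf.slope_le_of_hasDerivAt hx ha hxa hf'
    rw [slope_def_field, div_le_iff₀ (sub_pos.2 hxa)] at hslope
    linarith

theorem hasDerivAt_logb_one_add_div (b : ℝ) {φ x : ℝ} (hx : x ≠ 0) (hφx : φ + x ≠ 0) :
    HasDerivAt (fun y ↦ logb b (1 + φ / y)) (-(φ * logb b (exp 1) / ((φ + x) * x))) x := by
  have harg : 1 + φ / x = (φ + x) / x := by field_simp; ring
  have harg_ne : 1 + φ / x ≠ 0 := harg ▸ div_ne_zero hφx hx
  have hinner : HasDerivAt (fun y ↦ 1 + φ / y) (φ * -(x ^ 2)⁻¹) x := by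
    simpa only [div_eq_mul_inv] using ((hasDerivAt_inv hx).const_mul φ).const_add 1
  refine ((hinner.log harg_ne).div_const (log b)).congr_deriv ?_
  rw [harg, logb, log_exp]
  field_simp

theorem convexOn_logb_one_add_div {b φ : ℝ} (hb : 1 < b) (hφ : 0 ≤ φ) :
    ConvexOn ℝ (Ioi 0) fun x ↦ logb b (1 + φ / x) := by
  have hderiv : ∀ x ∈ Ioi (0 : ℝ), HasDerivAt (fun y ↦ logb b (1 + φ / y))
      (-(φ * logb b (exp 1) / ((φ + x) * x))) x := fun x (hx : 0 < x) ↦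
    hasDerivAt_logb_one_add_div b hx.ne' (by positivity)
  have hlogb : 0 ≤ logb b (exp 1) := logb_nonneg hb (one_le_exp zero_le_one)
  refine MonotoneOn.convexOn_of_deriv (convex_Ioi 0)
    (fun x hx ↦ (hderiv x hx).continuousAt.continuousWithinAt) ?_ ?_ <;> rw [interior_Ioi]
  · exact fun x hx ↦ (hderiv x hx).differentiableAt.differentiableWithinAt
  · intro x (hx : 0 < x) y (hy : 0 < y) hxy
    rw [(hderiv x hx).deriv, (hderiv y hy).deriv]
    gcongr

theorem rate_function_sca_lower_bound_general {E : Type*} [SeminormedAddCommGroup E] {b φ H : ℝ}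
    (hb : 1 < b) (hφ : 0 ≤ φ) (hH : 0 < H) (q q₀ p : E) :
    logb b (1 + φ / (H ^ 2 + ‖q - p‖ ^ 2))
      ≥ logb b (1 + φ / (H ^ 2 + ‖q₀ - p‖ ^ 2))
        - φ * logb b (exp 1) * (‖q - p‖ ^ 2 - ‖q₀ - p‖ ^ 2)
            / ((φ + H ^ 2 + ‖q₀ - p‖ ^ 2) * (H ^ 2 + ‖q₀ - p‖ ^ 2)) := by
  have hpos (r : E) : 0 < H ^ 2 + ‖r - p‖ ^ 2 := by positivity
  have htangent := tangent_line_le_of_convexOn (convexOn_logb_one_add_div hb hφ)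
    (hpos q₀) (hpos q) (hasDerivAt_logb_one_add_div b (hpos q₀).ne' (by positivity))
  rwa [add_sub_add_left_eq_sub, neg_mul, ← sub_eq_add_neg, div_mul_eq_mul_div, ← add_assoc]
    at htangent

/-- Theorem 5: global concave lower bound of the achievable-rate function
`g(q) = log₂(1 + φ/(H² + ‖q - p‖²))` obtained from its first-order expansion
at a local point `q₀`. -/
theorem rate_function_sca_lower_bound (φ H : ℝ) (hφ : 0 < φ) (hH : 0 < H)
    (q q₀ p : EuclideanSpace ℝ (Fin 2)) :
    Real.logb 2 (1 + φ / (H ^ 2 + ‖q - p‖ ^ 2))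
      ≥ Real.logb 2 (1 + φ / (H ^ 2 + ‖q₀ - p‖ ^ 2))
        - φ * Real.logb 2 (Real.exp 1) * (‖q - p‖ ^ 2 - ‖q₀ - p‖ ^ 2)
            / ((φ + H ^ 2 + ‖q₀ - p‖ ^ 2) * (H ^ 2 + ‖q₀ - p‖ ^ 2)) :=
  rate_function_sca_lower_bound_general one_lt_two hφ.le hH q q₀ p
end

section
/- Fix n ∈ ℕ and real parameters LC_i, KU_i, KC_i, φ_i, γ_i for each i ∈ Fin n. A strategy profile is a function a : Fin n → {L, U, C} over a three-element strategy type. Define the utility U_i(a) = LC_i if a_i = L; U_i(a) = KU_i + φ_i·(Σ_{j : a_j = U} φ_j) + γ_i·(Σ_{j : a_j ∈ {U,C}} γ_j) if a_i = U; and U_i(a) = KC_i + γ_i·(Σ_{j : a_j ∈ {U,C}} γ_j) if a_i = C. Define the potential F(a) = Σ_{i : a_i = U} (KU_i + φ_i·Σ_{j ≤ i, a_j = U} φ_j) + Σ_{i : a_i = C} KC_i + Σ_{i : a_i ∈ {U,C}} γ_i·(Σ_{j ≤ i, a_j ∈ {U,C}} γ_j) + Σ_{i : a_i = L} LC_i.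 Then for every player i ∈ Fin n and every pair of strategy profiles a, a' with a_j = a'_j for all j ≠ i, one has U_i(a) - U_i(a') = F(a) - F(a'). -/
open Finset

/-- Offloading strategies: local computing, UAV-assisted computing,
cloud-assisted computing. -/
inductive OffloadStrat : Type
  | L : OffloadStrat
  | U : OffloadStrat
  | C : OffloadStrat
  deriving DecidableEq

/-- Utility of player `i` under profile `a` (after substituting the optimal
resource allocation). -/
def MIoTDUtil {n : ℕ} (LC KU KC φ γ : Fin n → ℝ)
    (a : Fin n → OffloadStrat) (i : Fin n) : ℝ :=
  match a i with
  | OffloadStrat.L => LC i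
  | OffloadStrat.U =>
      KU i + φ i * (∑ j ∈ univ.filter (fun j => a j = OffloadStrat.U), φ j)
        + γ i * (∑ j ∈ univ.filter
            (fun j => a j = OffloadStrat.U ∨ a j = OffloadStrat.C), γ j)
  | OffloadStrat.C =>
      KC i + γ i * (∑ j ∈ univ.filter
            (fun j => a j = OffloadStrat.U ∨ a j = OffloadStrat.C), γ j)

/-- The potential function `F` of equation (62). -/
def MIoTDPot {n : ℕ} (LC KU KC φ γ : Fin n → ℝ)
    (a : Fin n → OffloadStrat) : ℝ :=
  (∑ i ∈ univ.filter (fun i => a i = OffloadStrat.U),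
      (KU i + φ i * ∑ j ∈ univ.filter
          (fun j => j ≤ i ∧ a j = OffloadStrat.U), φ j))
  + (∑ i ∈ univ.filter (fun i => a i = OffloadStrat.C), KC i)
  + (∑ i ∈ univ.filter
        (fun i => a i = OffloadStrat.U ∨ a i = OffloadStrat.C),
      γ i * ∑ j ∈ univ.filter
          (fun j => j ≤ i ∧ (a j = OffloadStrat.U ∨ a j = OffloadStrat.C)), γ j)
  + (∑ i ∈ univ.filter (fun i => a i = OffloadStrat.L), LC i)

/-!
Adding a player `i` to a set `s` of users of a shared resource raises
`∑ k ∈ s, w k * ∑ j ∈ s with j ≤ k, w j` by `w i * ∑ j ∈ insert i s, w j`: the players below `i`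
enter through the new summand `k = i`, those above `i` through the growth of their own inner sums.
This increment is the congestion cost of `i`, whatever the position of `i` in the order. Hence
`F(a) - U_i(a)` is the potential of the game without player `i`, which a deviation of `i` does not
change.
-/

theorem sum_filter_le_add_sum_filter_ge_of_notMem {ι M : Type*} [LinearOrder ι] [AddCommMonoid M]
    {s : Finset ι} {i : ι} (hi : i ∉ s) (w : ι → M) :
    ∑ j ∈ s with j ≤ i, w j + ∑ j ∈ s with i ≤ j, w j = ∑ j ∈ s, w j := by
  have not_le_iff : ∀ j ∈ s, (¬ j ≤ i ↔ i ≤ j) := fun j hj =>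
    not_le.trans ⟨le_of_lt, fun hij => hij.lt_of_ne (ne_of_mem_of_not_mem hj hi).symm⟩
  rw [← sum_filter_add_sum_filter_not s (· ≤ i) w, filter_congr not_le_iff]

section OffloadingGame

variable {ι R : Type*} [LinearOrder ι] [CommSemiring R]

/-- The congestion potential of a resource used by the players in `s` with weights `w`: the sum of
`w i * w j` over the pairs `j ≤ i` in `s`, each unordered pair counted once and the diagonal
included. -/
def orderedPairSum (s : Finset ι) (w : ι → R) : R :=
  ∑ i ∈ s, w i * ∑ j ∈ s with j ≤ i, w j

theorem orderedPairSum_insert {s : Finset ι} {i : ι} (hi : i ∉ s) (w : ι → R) :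
    orderedPairSum (insert i s) w = orderedPairSum s w + w i * ∑ j ∈ insert i s, w j := by
  have inner_self : ∑ j ∈ insert i s with j ≤ i, w j = w i + ∑ j ∈ s with j ≤ i, w j := by
    rw [filter_insert, if_pos le_rfl, sum_insert (by simp [hi])]
  have inner_other (k : ι) : ∑ j ∈ insert i s with j ≤ k, w j
      = (if i ≤ k then w i else 0) + ∑ j ∈ s with j ≤ k, w j := by
    rw [sum_filter, sum_insert hi, ← sum_filter]
  have outer_growth : ∑ k ∈ s, w k * (if i ≤ k then w i else 0)
      = w i * ∑ k ∈ s with i ≤ k, w k := by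
    simp only [mul_ite, mul_zero, ← sum_filter, mul_sum, mul_comm]
  calc orderedPairSum (insert i s) w
      = w i * (w i + ∑ j ∈ s with j ≤ i, w j)
          + (w i * ∑ j ∈ s with i ≤ j, w j + orderedPairSum s w) := by
        rw [orderedPairSum, sum_insert hi, inner_self]
        simp only [inner_other, mul_add, sum_add_distrib, outer_growth, orderedPairSum]
    _ = orderedPairSum s w
          + w i * (w i + (∑ j ∈ s with j ≤ i, w j + ∑ j ∈ s with i ≤ j, w j)) := by ring
    _ = orderedPairSum s w + w i * ∑ j ∈ insert i s, w j := by
        rw [sum_filter_le_add_sum_filter_ge_of_notMem hi, sum_insert hi]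

/-- The utility of player `i` in the offloading game played by the players in `s` only; `MIoTDUtil`
is the case of all players. Leaving a player out is encoded by shrinking `s`, so that the profile
`a` keeps its type. -/
def MIoTDUtilOn {ι R : Type*} [Semiring R] (s : Finset ι) (LC KU KC φ γ : ι → R)
    (a : ι → OffloadStrat) (i : ι) : R :=
  match a i with
  | .L => LC i
  | .U => KU i + φ i * ∑ j ∈ s with a j = .U, φ j + γ i * ∑ j ∈ s with a j = .U ∨ a j = .C, γ j
  | .C => KC i + γ i * ∑ j ∈ s with a j = .U ∨ a j = .C, γ j

/-- The potential of the offloading game played by the players in `s` only; `MIoTDPot` is the case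
of all players. The standalone costs `KU` are kept apart from the congestion terms, which are
`orderedPairSum`s. -/
def MIoTDPotOn (s : Finset ι) (LC KU KC φ γ : ι → R) (a : ι → OffloadStrat) : R :=
  ∑ i ∈ s with a i = .U, KU i + orderedPairSum {i ∈ s | a i = .U} φ
    + ∑ i ∈ s with a i = .C, KC i + orderedPairSum {i ∈ s | a i = .U ∨ a i = .C} γ
    + ∑ i ∈ s with a i = .L, LC i

theorem MIoTDPotOn_congr {s : Finset ι} {a a' : ι → OffloadStrat} (h : ∀ j ∈ s, a j = a' j)
    (LC KU KC φ γ : ι → R) :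
    MIoTDPotOn s LC KU KC φ γ a = MIoTDPotOn s LC KU KC φ γ a' := by
  have filter_eq (p : OffloadStrat → Prop) [DecidablePred p] :
      {j ∈ s | p (a j)} = {j ∈ s | p (a' j)} :=
    filter_congr fun j hj => by rw [h j hj]
  simp only [MIoTDPotOn, filter_eq (· = .U), filter_eq (· = .C), filter_eq (· = .L),
    filter_eq fun x => x = .U ∨ x = .C]

theorem MIoTDPotOn_insert {s : Finset ι} {i : ι} (hi : i ∉ s) (LC KU KC φ γ : ι → R)
    (a : ι → OffloadStrat) :
    MIoTDPotOn (insert i s) LC KU KC φ γ a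
      = MIoTDPotOn s LC KU KC φ γ a + MIoTDUtilOn (insert i s) LC KU KC φ γ a i := by
  have notMem_filter (p : ι → Prop) [DecidablePred p] : i ∉ s.filter p :=
    fun h => hi (mem_of_mem_filter i h)
  cases hai : a i <;>
    simp only [MIoTDPotOn, MIoTDUtilOn, filter_insert, hai, reduceCtorEq, or_self, or_true,
      or_false, if_true, if_false, sum_insert (notMem_filter _),
      orderedPairSum_insert (notMem_filter _)] <;>
    ring

end OffloadingGame

theorem MIoTDUtilOn_univ {n : ℕ} (LC KU KC φ γ : Fin n → ℝ) (a : Fin n → OffloadStrat)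
    (i : Fin n) : MIoTDUtilOn univ LC KU KC φ γ a i = MIoTDUtil LC KU KC φ γ a i :=
  rfl

theorem MIoTDPotOn_univ {n : ℕ} (LC KU KC φ γ : Fin n → ℝ) (a : Fin n → OffloadStrat) :
    MIoTDPotOn univ LC KU KC φ γ a = MIoTDPot LC KU KC φ γ a := by
  simp only [MIoTDPotOn, MIoTDPot, orderedPairSum, filter_filter, sum_add_distrib, and_comm]

theorem MIoTD_exact_potential_game_general {ι R : Type*} [LinearOrder ι] [CommRing R]
    {s : Finset ι} (LC KU KC φ γ : ι → R) {i : ι} (hi : i ∈ s) (a a' : ι → OffloadStrat)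
    (h : ∀ j ∈ s, j ≠ i → a j = a' j) :
    MIoTDUtilOn s LC KU KC φ γ a i - MIoTDUtilOn s LC KU KC φ γ a' i
      = MIoTDPotOn s LC KU KC φ γ a - MIoTDPotOn s LC KU KC φ γ a' := by
  have potential_eq (b : ι → OffloadStrat) : MIoTDPotOn s LC KU KC φ γ b
      = MIoTDPotOn (s.erase i) LC KU KC φ γ b + MIoTDUtilOn s LC KU KC φ γ b i := by
    simpa only [insert_erase hi] using
      MIoTDPotOn_insert (notMem_erase i s) LC KU KC φ γ b
  have rest_eq : MIoTDPotOn (s.erase i) LC KU KC φ γ a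
      = MIoTDPotOn (s.erase i) LC KU KC φ γ a' :=
    MIoTDPotOn_congr (fun j hj => h j (mem_of_mem_erase hj) (ne_of_mem_erase hj)) LC KU KC φ γ
  rw [potential_eq a, potential_eq a', rest_eq, add_sub_add_left_eq_sub]

/-- Theorem 6: the multi-IoTD computation offloading game is an exact potential
game with potential function `MIoTDPot`. -/
theorem MIoTD_exact_potential_game {n : ℕ} (LC KU KC φ γ : Fin n → ℝ)
    (i : Fin n) (a a' : Fin n → OffloadStrat)
    (h : ∀ j, j ≠ i → a j = a' j) :
    MIoTDUtil LC KU KC φ γ a i - MIoTDUtil LC KU KC φ γ a' i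
      = MIoTDPot LC KU KC φ γ a - MIoTDPot LC KU KC φ γ a' := by
  simpa only [MIoTDUtilOn_univ, MIoTDPotOn_univ] using
    MIoTD_exact_potential_game_general LC KU KC φ γ (mem_univ i) a a' fun j _ => h j
end
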